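/- For the full shift T on X = ∏_{n∈ℤ} M over a perfect Polish metric space M, the set {μ ∈ M(T) : R̄(x) = +∞ for μ-a.e. x ∈ X} of invariant measures whose upper recurrence rate is infinite almost everywhere is a dense Gδ subset of M(T). -/

import Mathlib

open Filter MeasureTheory Topology Metric Set
open scoped ENNReal NNReal

noncomputable section
attribute [local instance] Classical.propDecidable

/-- The full (bilateral) shift on the product space `ℤ → M`: `(T x) i = x (i - 1)`. -/
def fullShift {M : Type*} (x : ℤ → M) : ℤ → M := fun i => x (i - 1)

/-- The metric `d(x,y) = ∑_{n ∈ ℤ} 2^{-|n|} ρ(xₙ,yₙ)/(1 + ρ(xₙ,yₙ))` on `ℤ → M`,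
compatible with the product topology. -/
def shiftDist {M : Type*} [MetricSpace M] (x y : ℤ → M) : ℝ :=
  ∑' n : ℤ, (1 / 2 : ℝ) ^ n.natAbs * (dist (x n) (y n) / (1 + dist (x n) (y n)))

/-- Lower local dimension `d̲_μ(x) = liminf_{ε → 0⁺} log μ(B(x,ε)) / log ε` of `μ` at `x`,
with respect to the distance function `d`; by convention it is `∞` if some ball
centered at `x` has measure zero. -/
def lowerLocalDim {X : Type*} [MeasurableSpace X] (d : X → X → ℝ)
    (μ : Measure X) (x : X) : ℝ≥0∞ :=
  if ∃ ε > 0, μ {y | d x y < ε} = 0 then ⊤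
  else liminf (fun ε : ℝ =>
    ENNReal.ofReal (Real.log (μ {y | d x y < ε}).toReal / Real.log ε)) (𝓝[>] (0 : ℝ))

/-- Upper local dimension `d̄_μ(x) = limsup_{ε → 0⁺} log μ(B(x,ε)) / log ε`. -/
def upperLocalDim {X : Type*} [MeasurableSpace X] (d : X → X → ℝ)
    (μ : Measure X) (x : X) : ℝ≥0∞ :=
  if ∃ ε > 0, μ {y | d x y < ε} = 0 then ⊤
  else limsup (fun ε : ℝ =>
    ENNReal.ofReal (Real.log (μ {y | d x y < ε}).toReal / Real.log ε)) (𝓝[>] (0 : ℝ))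

/-- The ratio `log τ_r(x) / (- log r)`, where `τ_r(x) = inf {n ≥ 1 | Tⁿ x ∈ B̄(x,r)}` is the
first return time of `x` to the closed ball `B̄(x,r)`; by convention it is `∞` when the
return time is infinite. -/
def recRatio {X : Type*} (d : X → X → ℝ) (T : X → X) (x : X) (r : ℝ) : ℝ≥0∞ :=
  if ∃ n : ℕ, 1 ≤ n ∧ d (T^[n] x) x ≤ r then
    ENNReal.ofReal
      (Real.log ((sInf {n : ℕ | 1 ≤ n ∧ d (T^[n] x) x ≤ r} : ℕ) : ℝ) / (- Real.log r))
  else ⊤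

/-- Lower recurrence rate `R̲(x) = liminf_{r → 0⁺} log τ_r(x) / (- log r)`. -/
def lowerRecRate {X : Type*} (d : X → X → ℝ) (T : X → X) (x : X) : ℝ≥0∞ :=
  liminf (recRatio d T x) (𝓝[>] (0 : ℝ))

/-- Upper recurrence rate `R̄(x) = limsup_{r → 0⁺} log τ_r(x) / (- log r)`. -/
def upperRecRate {X : Type*} (d : X → X → ℝ) (T : X → X) (x : X) : ℝ≥0∞ :=
  limsup (recRatio d T x) (𝓝[>] (0 : ℝ))

/-- The ratio `log τ_r(x,y) / (- log r)`, where `τ_r(x,y) = inf {n ≥ 1 | Tⁿ x ∈ B̄(y,r)}` is the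
first entrance time of the orbit of `x` into the closed ball `B̄(y,r)`; by convention `∞`
when the entrance time is infinite. -/
def waitRatio {X : Type*} (d : X → X → ℝ) (T : X → X) (x y : X) (r : ℝ) : ℝ≥0∞ :=
  if ∃ n : ℕ, 1 ≤ n ∧ d (T^[n] x) y ≤ r then
    ENNReal.ofReal
      (Real.log ((sInf {n : ℕ | 1 ≤ n ∧ d (T^[n] x) y ≤ r} : ℕ) : ℝ) / (- Real.log r))
  else ⊤

/-- Lower quantitative waiting time indicator `R̲(x,y)`. -/
def lowerWaitRate {X : Type*} (d : X → X → ℝ) (T : X → X) (x y : X) : ℝ≥0∞ :=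
  liminf (waitRatio d T x y) (𝓝[>] (0 : ℝ))

/-- Upper quantitative waiting time indicator `R̄(x,y)`. -/
def upperWaitRate {X : Type*} (d : X → X → ℝ) (T : X → X) (x y : X) : ℝ≥0∞ :=
  limsup (waitRatio d T x y) (𝓝[>] (0 : ℝ))

/-- The entropy `H(P) = ∑_c -μ(P_c) log μ(P_c)` of the finite measurable partition
`P_c = f ⁻¹ {c}` of `X` induced by a map `f` into a finite set. -/
def partitionEntropy {X F : Type*} [MeasurableSpace X] [Fintype F]
    (μ : Measure X) (f : X → F) : ℝ :=
  ∑ c : F, Real.negMulLog ((μ (f ⁻¹' {c})).toReal)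

/-- The Kolmogorov–Sinai (measure-theoretic) entropy `h_μ(T)`: the supremum, over all finite
measurable partitions (coded by measurable maps `f : X → Fin k`), of the limit of
`H(⋁_{i<n} T⁻ⁱ P) / n`. -/
def kolmogorovSinaiEntropy {X : Type*} [MeasurableSpace X] (T : X → X) (μ : Measure X) :
    ℝ≥0∞ :=
  ⨆ (k : ℕ) (f : X → Fin k) (_ : Measurable f),
    ENNReal.ofReal
      (liminf (fun n : ℕ =>
        partitionEntropy μ (fun x (i : Fin n) => f (T^[(i : ℕ)] x)) / n) atTop)

end

/-!
The upper recurrence rate of `x` is infinite exactly when, for every `N`, the return time to the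
`r`-ball exceeds `r⁻ᴺ` for arbitrarily small `r`. For fixed `r` only finitely many return times are
excluded, so this is a `Gδ` condition on `x`; and since `μ ↦ μ G` is lower semicontinuous for open
`G`, giving full measure to a `Gδ` set is a `Gδ` condition on `μ`.

For density, move each coordinate of a `μ`-random point to an independent random point chosen, with
a diffuse law, near a finite quantization of that coordinate. The resulting law is invariant and
close to `μ`. Conditionally on the original point the coordinates are independent and, as only
finitely many laws occur, uniformly diffuse: for any `p > 0` there is a `δ` such that each of them
falls in a given `δ`-ball with probability at most `p`. A return at a given time to the ball of
radius about `2⁻ᴸ` matches `L` coordinates with earlier ones up to `δ`, which has probability at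
most `p ^ L`. With `p = 2⁻ᴺ⁻¹` this beats the roughly `2 ^ (N * L)` return times up to `r⁻ᴺ`, and
Borel–Cantelli applies.
-/

open ProbabilityTheory unitInterval

section GδSets

variable {X : Type*} [TopologicalSpace X]

theorem isGδ_setOf_frequently_mem {ι : Type*} {l : Filter ι} [l.IsCountablyGenerated]
    {U : ι → Set X} (hU : ∀ᶠ i in l, IsOpen (U i)) : IsGδ {x | ∃ᶠ i in l, x ∈ U i} := by
  obtain ⟨B, hB⟩ := l.exists_antitone_basis
  have h_eq : {x | ∃ᶠ i in l, x ∈ U i} = ⋂ n, ⋃ i ∈ B n ∩ {i | IsOpen (U i)}, U i := by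
    ext x
    simp only [mem_iInter, mem_iUnion, exists_prop]
    refine ⟨fun h n => ?_, fun h => hB.1.frequently_iff.2 fun {n} _ => ?_⟩
    · obtain ⟨i, hx, hi⟩ := (h.and_eventually (inter_mem (hB.mem n) hU)).exists
      exact ⟨i, hi, hx⟩
    · obtain ⟨i, hi, hx⟩ := h n
      exact ⟨i, hi.1, hx⟩
  rw [h_eq]
  exact IsGδ.iInter_of_isOpen fun n => isOpen_biUnion fun i hi => hi.2

variable [MeasurableSpace X] [OpensMeasurableSpace X] [HasOuterApproxClosed X]

theorem isOpen_setOf_lt_measure {G : Set X} (hG : IsOpen G) (c : ℝ≥0∞) :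
    IsOpen {μ : ProbabilityMeasure X | c < (μ : Measure X) G} :=
  isOpen_iff_mem_nhds.2 fun _ hμ => eventually_lt_of_lt_liminf <|
    hμ.trans_le (ProbabilityMeasure.le_liminf_measure_open_of_tendsto tendsto_id hG)

theorem isGδ_setOf_ae_mem_of_isOpen {G : Set X} (hG : IsOpen G) :
    IsGδ {μ : ProbabilityMeasure X | ∀ᵐ x ∂(μ : Measure X), x ∈ G} := by
  obtain ⟨u, -, hu_lt, hu⟩ := exists_seq_strictMono_tendsto' (zero_lt_one : (0 : ℝ≥0∞) < 1)
  have h_eq : {μ : ProbabilityMeasure X | ∀ᵐ x ∂(μ : Measure X), x ∈ G} =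
      ⋂ n, {μ : ProbabilityMeasure X | u n < (μ : Measure X) G} := by
    ext μ
    simp only [mem_iInter]
    refine (mem_ae_iff_prob_eq_one hG.measurableSet).trans ⟨fun h n => ?_, fun h => ?_⟩
    · exact (hu_lt n).2.trans_eq h.symm
    · exact le_antisymm prob_le_one (le_of_tendsto' hu fun n => (h n).le)
  rw [h_eq]
  exact IsGδ.iInter_of_isOpen fun n => isOpen_setOf_lt_measure hG (u n)

theorem isGδ_setOf_ae_mem {G : Set X} (hG : IsGδ G) :
    IsGδ {μ : ProbabilityMeasure X | ∀ᵐ x ∂(μ : Measure X), x ∈ G} := by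
  obtain ⟨U, hU, rfl⟩ := hG.eq_iInter_nat
  simp only [mem_iInter, ae_all_iff, ofPred_forall]
  exact IsGδ.iInter fun n => isGδ_setOf_ae_mem_of_isOpen (hU n)

end GδSets

section SlowReturn

variable {X : Type*} {d : X → X → ℝ} {T : X → X} {x : X} {N : ℕ} {r : ℝ}

/-- The points whose first return time `τ_r` to the closed `r`-ball exceeds `r⁻ᴺ`, written without
`τ_r`, so that a point that never returns belongs to the set. -/
def slowReturnSet (d : X → X → ℝ) (T : X → X) (N : ℕ) (r : ℝ) : Set X :=
  {x | ∀ k : ℕ, 1 ≤ k → d (T^[k] x) x ≤ r → 1 < k * r ^ N}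

theorem natCast_lt_recRatio_iff (hr₀ : 0 < r) (hr₁ : r < 1) :
    N < recRatio d T x r ↔ x ∈ slowReturnSet d T N r := by
  by_cases h_ret : ∃ n : ℕ, 1 ≤ n ∧ d (T^[n] x) x ≤ r
  · rw [recRatio, if_pos h_ret]
    set τ := sInf {n : ℕ | 1 ≤ n ∧ d (T^[n] x) x ≤ r}
    obtain ⟨hτ_one, hτ_dist⟩ : 1 ≤ τ ∧ d (T^[τ] x) x ≤ r := Nat.sInf_mem h_ret
    have hτ_pos : (0 : ℝ) < τ := by exact_mod_cast hτ_one
    have hlog : 0 < -Real.log r := neg_pos.2 (Real.log_neg hr₀ hr₁)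
    calc (N : ℝ≥0∞) < ENNReal.ofReal (Real.log τ / -Real.log r)
        ↔ 0 < Real.log (τ * r ^ N) := by
          rw [ENNReal.natCast_lt_ofReal, lt_div_iff₀ hlog, Real.log_mul hτ_pos.ne' (by positivity),
            Real.log_pow]
          constructor <;> intro h <;> linarith
      _ ↔ 1 < τ * r ^ N := Real.log_pos_iff (by positivity)
      _ ↔ x ∈ slowReturnSet d T N r := by
          refine ⟨fun h k hk hdist => h.trans_le ?_, fun h => h τ hτ_one hτ_dist⟩
          have hτk : τ ≤ k := Nat.sInf_le ⟨hk, hdist⟩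
          gcongr
  · rw [recRatio, if_neg h_ret]
    exact iff_of_true (ENNReal.natCast_lt_top N) fun k hk hdist => absurd ⟨k, hk, hdist⟩ h_ret

theorem upperRecRate_eq_top_iff :
    upperRecRate d T x = ⊤ ↔ ∀ N, ∃ᶠ r in 𝓝[>] (0 : ℝ), x ∈ slowReturnSet d T N r := by
  have h_iff : ∀ N : ℕ, ∀ᶠ r in 𝓝[>] (0 : ℝ),
      (N < recRatio d T x r ↔ x ∈ slowReturnSet d T N r) := fun N => by
    filter_upwards [Ioo_mem_nhdsGT zero_lt_one] with r hr
    exact natCast_lt_recRatio_iff hr.1 hr.2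
  simp only [← frequently_congr (h_iff _)]
  refine ⟨fun h N => frequently_lt_of_lt_limsup (by isBoundedDefault) ?_, fun h => ?_⟩
  · exact (ENNReal.natCast_lt_top N).trans_eq h.symm
  · refine ENNReal.eq_top_of_forall_nnreal_le fun c => ?_
    obtain ⟨N, hN⟩ := exists_nat_ge c
    refine le_limsup_of_frequently_le ((h N).mono fun r hr => ?_) (by isBoundedDefault)
    exact (by exact_mod_cast hN : (c : ℝ≥0∞) ≤ N).trans hr.le

variable [TopologicalSpace X]

theorem isOpen_slowReturnSet (hd : ∀ k, Continuous fun x => d (T^[k] x) x) (hr : 0 < r) :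
    IsOpen (slowReturnSet d T N r) := by
  have h_eq : slowReturnSet d T N r =
      ⋂ k ∈ {k : ℕ | 1 ≤ k ∧ k * r ^ N ≤ 1}, {x | r < d (T^[k] x) x} := by
    ext x
    simp only [slowReturnSet, mem_ofPred_eq, mem_iInter, and_imp]
    exact forall₂_congr fun k _ => by rw [← not_imp_not, not_lt, not_le]
  have h_fin : {k : ℕ | 1 ≤ k ∧ k * r ^ N ≤ 1}.Finite :=
    (finite_Iic ⌊1 / r ^ N⌋₊).subset fun k hk =>
      Nat.le_floor ((le_div_iff₀ (by positivity)).2 hk.2)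
  rw [h_eq]
  exact h_fin.isOpen_biInter fun k _ => isOpen_lt continuous_const (hd k)

theorem isGδ_setOf_upperRecRate_eq_top (hd : ∀ k, Continuous fun x => d (T^[k] x) x) :
    IsGδ {x | upperRecRate d T x = ⊤} := by
  simp only [upperRecRate_eq_top_iff, ofPred_forall]
  refine IsGδ.iInter fun N => isGδ_setOf_frequently_mem ?_
  filter_upwards [self_mem_nhdsWithin] with r hr
  exact isOpen_slowReturnSet hd hr

end SlowReturn

section ShiftMetric

theorem fullShift_iterate_apply {M : Type*} (k : ℕ) (x : ℤ → M) (n : ℤ) :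
    fullShift^[k] x n = x (n - k) := by
  induction k generalizing n with
  | zero => simp
  | succ k ih =>
    rw [Function.iterate_succ_apply', fullShift, ih]
    congr 1
    push_cast
    ring

theorem measurable_fullShift {M : Type*} [MeasurableSpace M] :
    Measurable (fullShift : (ℤ → M) → ℤ → M) :=
  measurable_pi_iff.2 fun i => measurable_pi_apply (i - 1)

theorem summable_half_pow_natAbs : Summable fun n : ℤ => (1 / 2 : ℝ) ^ n.natAbs :=
  .of_nat_of_neg (by simpa using summable_geometric_two) (by simpa using summable_geometric_two)

variable {M : Type*} [MetricSpace M] (x y : ℤ → M)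

theorem shiftDist_term_le (n : ℤ) :
    (1 / 2 : ℝ) ^ n.natAbs * (dist (x n) (y n) / (1 + dist (x n) (y n))) ≤
      (1 / 2) ^ n.natAbs :=
  mul_le_of_le_one_right (by positivity) (div_le_one_of_le₀ (by linarith) (by positivity))

theorem term_le_shiftDist (n : ℤ) :
    (1 / 2 : ℝ) ^ n.natAbs * (dist (x n) (y n) / (1 + dist (x n) (y n))) ≤ shiftDist x y :=
  (Summable.of_nonneg_of_le (fun _ => by positivity) (shiftDist_term_le x y)
    summable_half_pow_natAbs).le_tsum n fun _ _ => by positivity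

theorem dist_apply_le_of_shiftDist_le {x y : ℤ → M} {δ : ℝ} (hδ : 0 < δ) {L : ℕ}
    (h : shiftDist x y ≤ δ / (1 + δ) * (1 / 2) ^ L) {n : ℤ} (hn : n.natAbs ≤ L) :
    dist (x n) (y n) ≤ δ := by
  set t := dist (x n) (y n)
  have : 0 ≤ t := dist_nonneg
  have h_ratio : t / (1 + t) ≤ δ / (1 + δ) := by
    refine le_of_mul_le_mul_right ?_ (by positivity : (0 : ℝ) < (1 / 2) ^ L)
    calc t / (1 + t) * (1 / 2) ^ L ≤ t / (1 + t) * (1 / 2) ^ n.natAbs := by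
          gcongr ?_ * ?_
          exact pow_le_pow_of_le_one (by norm_num) (by norm_num) hn
      _ = (1 / 2) ^ n.natAbs * (t / (1 + t)) := mul_comm _ _
      _ ≤ δ / (1 + δ) * (1 / 2) ^ L := (term_le_shiftDist x y n).trans h
  rw [div_le_div_iff₀ (by positivity) (by positivity)] at h_ratio
  linarith

theorem continuous_shiftDist : Continuous fun z : (ℤ → M) × (ℤ → M) => shiftDist z.1 z.2 := by
  refine continuous_tsum (fun n => ?_) summable_half_pow_natAbs fun n z => ?_
  · exact continuous_const.mul <| Continuous.div (by fun_prop) (by fun_prop) fun z => by positivity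
  · rw [Real.norm_of_nonneg (by positivity)]
    exact shiftDist_term_le z.1 z.2 n

theorem continuous_shiftDist_fullShift_iterate (k : ℕ) :
    Continuous fun x : ℤ → M => shiftDist (fullShift^[k] x) x := by
  have h_iter : Continuous (fullShift^[k] : (ℤ → M) → ℤ → M) :=
    Continuous.iterate (continuous_pi fun i => continuous_apply (i - 1)) k
  exact continuous_shiftDist.comp (h_iter.prodMk continuous_id)

end ShiftMetric

section DiffuseMeasures

theorem le_measure_limsup_atTop {α : Type*} [MeasurableSpace α] {μ : Measure α} [IsFiniteMeasure μ]
    {A : ℕ → Set α} (hA : ∀ n, MeasurableSet (A n)) {η : ℝ≥0∞} (hη : ∀ n, η ≤ μ (A n)) :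
    η ≤ μ (limsup A atTop) := by
  rw [limsup_eq_iInf_iSup_of_nat]
  simp only [iSup_eq_iUnion, iInf_eq_iInter]
  refine ge_of_tendsto' (tendsto_measure_iInter_atTop
    (fun n => (MeasurableSet.biUnion (to_countable _) fun i _ => hA i).nullMeasurableSet)
    (fun m n hmn => biUnion_subset_biUnion_left fun i hi => hmn.trans hi)
    ⟨0, measure_ne_top _ _⟩) fun n => (hη n).trans ?_
  exact measure_mono (subset_biUnion_of_mem (u := A) (le_refl n))

theorem eventually_forall_measure_closedBall_le {M : Type*} [MetricSpace M] [MeasurableSpace M]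
    [OpensMeasurableSpace M] (μ : Measure M) [IsFiniteMeasure μ] [NullSingletonClass μ]
    {η : ℝ≥0∞} (hη : 0 < η) : ∀ᶠ δ in 𝓝[>] (0 : ℝ), ∀ w, μ (closedBall w δ) ≤ η := by
  by_contra h
  simp only [not_eventually, not_forall, not_le] at h
  have h_large : ∀ n : ℕ, ∃ δ, (∃ w, η < μ (closedBall w δ)) ∧ δ ∈ Ioo (0 : ℝ) (1 / (n + 1)) :=
    fun n => (h.and_eventually (Ioo_mem_nhdsGT Nat.one_div_pos_of_nat)).exists
  choose δ hw hδ using h_large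
  choose w hw using hw
  -- The limsup of these balls has mass at least `η`, and they shrink to each of its points.
  obtain ⟨x, hx⟩ : (limsup (fun n => closedBall (w n) (δ n)) atTop).Nonempty :=
    nonempty_of_measure_ne_zero <| (hη.trans_le <|
      le_measure_limsup_atTop (fun n => measurableSet_closedBall) fun n => (hw n).le).ne'
  have hδ_lim : Tendsto (fun n => 2 * δ n) atTop (𝓝 0) := by
    simpa using (squeeze_zero (fun n => (hδ n).1.le) (fun n => (hδ n).2.le)
      tendsto_one_div_add_atTop_nhds_zero_nat).const_mul 2
  have h_lim : Tendsto (fun n => μ (cthickening (2 * δ n) {x})) atTop (𝓝 0) := by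
    simpa [Function.comp_def] using (tendsto_measure_cthickening_of_isClosed (μ := μ)
      ⟨1, one_pos, measure_ne_top _ _⟩ isClosed_singleton).comp hδ_lim
  obtain ⟨n, hxn, hn⟩ :=
    ((mem_limsup_iff_frequently_mem.1 hx).and_eventually (h_lim.eventually_lt_const hη)).exists
  rw [cthickening_singleton _ (by linarith [(hδ n).1])] at hn
  refine (hw n).not_ge (le_trans (measure_mono ?_) hn.le)
  refine closedBall_subset_closedBall' ?_
  rw [dist_comm]
  linarith [mem_closedBall.1 hxn]

theorem nullSingletonClass_map {α β : Type*} [MeasurableSpace α] [MeasurableSpace β]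
    [MeasurableSingletonClass β] {f : α → β} (hf : Measurable f) (hf_inj : f.Injective)
    (μ : Measure α) [NullSingletonClass μ] : NullSingletonClass (μ.map f) where
  measure_singleton y := by
    rw [Measure.map_apply hf (measurableSet_singleton y)]
    exact (subsingleton_singleton.preimage hf_inj).measure_zero μ

end DiffuseMeasures

section Independence

variable {Ω R S : Type*} [MeasurableSpace Ω] [MeasurableSpace R] [MeasurableSpace S]

theorem measure_prod_univ_inter_le (μ : Measure R) (ν : Measure S) [SFinite ν] {A : Set R}
    (hA : MeasurableSet A) {B : Set (R × S)} (hB : MeasurableSet B) {p : ℝ≥0∞}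
    (hp : ∀ r, ν (Prod.mk r ⁻¹' B) ≤ p) : μ.prod ν (A ×ˢ univ ∩ B) ≤ p * μ A := by
  rw [Measure.prod_apply ((hA.prod .univ).inter hB), ← lintegral_indicator_const hA]
  refine lintegral_mono fun r => ?_
  by_cases hr : r ∈ A
  · rw [indicator_of_mem hr]
    exact (measure_mono fun s hs => hs.2).trans (hp r)
  · simp [hr]

variable {P : Measure Ω} [IsProbabilityMeasure P]

theorem measure_setOf_and_mem_le_of_indepFun {W : Ω → R} {Z : Ω → S} (hW : Measurable W)
    (hZ : Measurable Z) (h_indep : IndepFun W Z P) {A : Set R} (hA : MeasurableSet A)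
    {B : Set (R × S)} (hB : MeasurableSet B) {p : ℝ≥0∞}
    (hp : ∀ r, P (Z ⁻¹' (Prod.mk r ⁻¹' B)) ≤ p) :
    P {ω | W ω ∈ A ∧ (W ω, Z ω) ∈ B} ≤ p * P {ω | W ω ∈ A} := by
  have h_law := (indepFun_iff_map_prod_eq_prod_map_map hW.aemeasurable hZ.aemeasurable).1 h_indep
  have := Measure.isProbabilityMeasure_map (μ := P) hZ.aemeasurable
  calc P {ω | W ω ∈ A ∧ (W ω, Z ω) ∈ B} = (P.map W).prod (P.map Z) (A ×ˢ univ ∩ B) := by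
        rw [← h_law, Measure.map_apply (hW.prodMk hZ) ((hA.prod .univ).inter hB)]
        congr 1
        ext ω
        simp
    _ ≤ p * P.map W A := measure_prod_univ_inter_le _ _ hA hB fun r => by
        rw [Measure.map_apply hZ (measurable_prodMk_left hB)]
        exact hp r
    _ = p * P {ω | W ω ∈ A} := by rw [Measure.map_apply hW hA, preimage]

theorem measure_forall_pair_mem_le_pow {ι M : Type*} [LinearOrder ι] [MeasurableSpace M]
    {Z : ι → Ω → M} (hZ : ∀ i, Measurable (Z i)) (h_indep : iIndepFun Z P) {D : Set (M × M)}
    (hD : MeasurableSet D) {p : ℝ≥0∞} (hp : ∀ i w, P (Z i ⁻¹' (Prod.mk w ⁻¹' D)) ≤ p)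
    {f : ι → ι} {s : Finset ι} (hf : ∀ i ∈ s, f i < i) :
    P {ω | ∀ i ∈ s, (Z (f i) ω, Z i ω) ∈ D} ≤ p ^ s.card := by
  induction s using Finset.induction_on_max with
  | empty => simp
  | insert a s ha ih =>
    simp only [Finset.forall_mem_insert] at hf ⊢
    -- `Z a` is independent of the pairs indexed by `s` together with `Z (f a)`.
    let S : Finset ι := s ∪ insert (f a) (s.image f)
    have hS : ∀ i ∈ s, i ∈ S ∧ f i ∈ S := fun i hi =>
      ⟨by simp [S, hi], by simp [S, Finset.mem_image_of_mem f hi]⟩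
    have hfa : f a ∈ S := by simp [S]
    have haS : Disjoint S {a} := by
      rw [Finset.disjoint_singleton_right]
      intro h
      simp only [S, Finset.mem_union, Finset.mem_insert, Finset.mem_image] at h
      rcases h with h | h | ⟨i, hi, h⟩
      · exact (ha a h).false
      · exact hf.1.ne' h
      · exact ((hf.2 i hi).trans (ha i hi)).ne h
    have h_past : IndepFun (fun ω (i : S) => Z i ω) (Z a) P :=
      (h_indep.indepFun_finset S {a} haS hZ).comp measurable_id
        (measurable_pi_apply (⟨a, Finset.mem_singleton_self a⟩ : ({a} : Finset ι)))
    let A : Set (S → M) := {v | ∀ i : s, (v ⟨f i, (hS i i.2).2⟩, v ⟨i, (hS i i.2).1⟩) ∈ D}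
    let B : Set ((S → M) × M) := {v | (v.1 ⟨f a, hfa⟩, v.2) ∈ D}
    have hA : MeasurableSet A := by
      simp only [A, ofPred_forall]
      exact .iInter fun i => hD.preimage (by fun_prop)
    have hB : MeasurableSet B := hD.preimage (by fun_prop)
    calc P {ω | (Z (f a) ω, Z a ω) ∈ D ∧ ∀ i ∈ s, (Z (f i) ω, Z i ω) ∈ D}
        = P {ω | (fun i : S => Z i ω) ∈ A ∧ ((fun i : S => Z i ω), Z a ω) ∈ B} := by
          simp only [A, B, mem_ofPred_eq, Subtype.forall, and_comm]
      _ ≤ p * P {ω | (fun i : S => Z i ω) ∈ A} :=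
          measure_setOf_and_mem_le_of_indepFun (measurable_pi_iff.2 fun i : S => hZ i) (hZ a)
            h_past hA hB fun v => hp a _
      _ ≤ p * p ^ s.card := by
          simpa only [A, mem_ofPred_eq, Subtype.forall] using mul_le_mul_right (ih hf.2) p
      _ = p ^ (insert a s).card := by
          rw [Finset.card_insert_of_notMem fun h => (ha a h).false, pow_succ']

end Independence

section IndependentProcess

variable {Ω M : Type*} [MeasurableSpace Ω] {P : Measure Ω} [IsProbabilityMeasure P]
  [MetricSpace M] [SecondCountableTopology M] [MeasurableSpace M] [OpensMeasurableSpace M]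
  {Z : ℤ → Ω → M}

theorem measure_notMem_slowReturnSet_le (hZ : ∀ n, Measurable (Z n)) (h_indep : iIndepFun Z P)
    {δ : ℝ} (hδ : 0 < δ) {p : ℝ≥0∞} (hp : ∀ n w, P (Z n ⁻¹' closedBall w δ) ≤ p) (N L : ℕ) :
    P {ω | (fun n => Z n ω) ∉
        slowReturnSet shiftDist fullShift N (δ / (1 + δ) * (1 / 2) ^ L)} ≤
      ⌊1 / (δ / (1 + δ) * (1 / 2) ^ L) ^ N⌋₊ * p ^ L := by
  set r := δ / (1 + δ) * (1 / 2) ^ L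
  have : 0 < r := by positivity
  have h_match : ∀ k : ℕ, 1 ≤ k →
      P {ω | ∀ n ∈ Finset.Ico (0 : ℤ) L, dist (Z (n - k) ω) (Z n ω) ≤ δ} ≤ p ^ L := fun k hk => by
    have h_pow := measure_forall_pair_mem_le_pow hZ h_indep (D := {q | dist q.1 q.2 ≤ δ})
      (measurableSet_le (by fun_prop) measurable_const)
      (fun n w => (measure_mono (preimage_mono fun y h => mem_closedBall'.2 h)).trans (hp n w))
      (f := fun n => n - k) (s := Finset.Ico 0 (L : ℤ)) fun n _ => by lia
    simpa using h_pow
  have h_cover : {ω | (fun n => Z n ω) ∉ slowReturnSet shiftDist fullShift N r} ⊆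
      ⋃ k ∈ Finset.Icc 1 ⌊1 / r ^ N⌋₊,
        {ω | ∀ n ∈ Finset.Ico (0 : ℤ) L, dist (Z (n - k) ω) (Z n ω) ≤ δ} := fun ω hω => by
    simp only [slowReturnSet, mem_ofPred_eq, not_forall, not_lt] at hω
    obtain ⟨k, hk, hdist, hkr⟩ := hω
    refine mem_biUnion (Finset.mem_Icc.2 ⟨hk, Nat.le_floor ?_⟩) fun n hn => ?_
    · rwa [le_div_iff₀ (by positivity)]
    · have hnL : n.natAbs ≤ L := by
        rw [Finset.mem_Ico] at hn
        lia
      simpa only [fullShift_iterate_apply] using dist_apply_le_of_shiftDist_le hδ hdist hnL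
  calc P {ω | (fun n => Z n ω) ∉ slowReturnSet shiftDist fullShift N r}
      ≤ ∑ k ∈ Finset.Icc 1 ⌊1 / r ^ N⌋₊,
          P {ω | ∀ n ∈ Finset.Ico (0 : ℤ) L, dist (Z (n - k) ω) (Z n ω) ≤ δ} :=
        (measure_mono h_cover).trans (measure_biUnion_finset_le _ _)
    _ ≤ ∑ _k ∈ Finset.Icc 1 ⌊1 / r ^ N⌋₊, p ^ L :=
        Finset.sum_le_sum fun k hk => h_match k (Finset.mem_Icc.1 hk).1
    _ = ⌊1 / r ^ N⌋₊ * p ^ L := by simp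

theorem floor_mul_pow_le_geometric {c : ℝ} (hc : 0 < c) (N L : ℕ) :
    (⌊1 / (c * (1 / 2) ^ L) ^ N⌋₊ : ℝ≥0∞) * ENNReal.ofReal ((1 / 2) ^ (N + 1)) ^ L ≤
      ENNReal.ofReal (1 / c ^ N * (1 / 2) ^ L) := by
  rw [← ENNReal.ofReal_pow (by positivity), ← ENNReal.ofReal_natCast,
    ← ENNReal.ofReal_mul (by positivity)]
  refine ENNReal.ofReal_le_ofReal ?_
  calc (⌊1 / (c * (1 / 2) ^ L) ^ N⌋₊ : ℝ) * ((1 / 2) ^ (N + 1)) ^ L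
      ≤ 1 / (c * (1 / 2) ^ L) ^ N * ((1 / 2) ^ (N + 1)) ^ L := by
        gcongr
        exact Nat.floor_le (by positivity)
    _ = 1 / c ^ N * (1 / 2) ^ L := by
        rw [mul_pow, ← pow_mul, ← pow_mul, add_mul, one_mul, pow_add, mul_comm L N]
        field_simp

theorem ae_upperRecRate_eq_top_of_iIndepFun (hZ : ∀ n, Measurable (Z n))
    (h_indep : iIndepFun Z P)
    (h_diffuse : ∀ η : ℝ≥0∞, 0 < η → ∃ δ > 0, ∀ n w, P (Z n ⁻¹' closedBall w δ) ≤ η) :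
    ∀ᵐ ω ∂P, upperRecRate shiftDist fullShift (fun n => Z n ω) = ⊤ := by
  simp only [upperRecRate_eq_top_iff, ae_all_iff]
  intro N
  obtain ⟨δ, hδ, hp⟩ := h_diffuse (ENNReal.ofReal ((1 / 2) ^ (N + 1))) (by positivity)
  set c := δ / (1 + δ)
  have hc : 0 < c := by positivity
  have h_radius : Tendsto (fun L : ℕ => c * (1 / 2) ^ L) atTop (𝓝[>] 0) := by
    refine tendsto_nhdsWithin_iff.2 ⟨?_, .of_forall fun L => mem_Ioi.2 (by positivity)⟩
    simpa using (tendsto_pow_atTop_nhds_zero_of_lt_one (r := (1 / 2 : ℝ)) (by norm_num)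
      (by norm_num)).const_mul c
  have h_summable : ∑' L : ℕ, P {ω | (fun n => Z n ω) ∉
      slowReturnSet shiftDist fullShift N (c * (1 / 2) ^ L)} ≠ ∞ :=
    ne_top_of_le_ne_top (summable_geometric_two.mul_left (1 / c ^ N)).tsum_ofReal_ne_top <|
      ENNReal.tsum_le_tsum fun L => (measure_notMem_slowReturnSet_le hZ h_indep hδ hp N L).trans
        (floor_mul_pow_le_geometric hc N L)
  filter_upwards [ae_eventually_notMem h_summable] with ω hω
  exact h_radius.frequently (hω.mono fun L hL => not_not.1 hL).frequently

end IndependentProcess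

section Randomization

variable {A B C : Type*}

/-- The coordinatewise image of a configuration `z.1` and a noise `z.2` under a rule
`φ : A → C → B`. -/
def randomize (φ : A → C → B) (z : (ℤ → A) × (ℤ → C)) : ℤ → B := fun n => φ (z.1 n) (z.2 n)

variable [MeasurableSpace A] [MeasurableSpace B] [MeasurableSpace C] {φ : A → C → B}

/-- The law of `randomize φ` when the configuration has law `μ` and the noise, independent of it, is
i.i.d. with law `P`. Measures of this form with infinite recurrence rate approximate `μ`. -/
noncomputable def randomizedLaw (φ : A → C → B) (μ : Measure (ℤ → A)) (P : Measure C) :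
    Measure (ℤ → B) :=
  (μ.prod (Measure.infinitePi fun _ => P)).map (randomize φ)

theorem measurable_randomize (hφ : Measurable φ.uncurry) : Measurable (randomize φ) :=
  measurable_pi_iff.2 fun n => hφ.comp (f := fun z : (ℤ → A) × (ℤ → C) => (z.1 n, z.2 n))
    (by fun_prop)

theorem isProbabilityMeasure_randomizedLaw (hφ : Measurable φ.uncurry) (μ : Measure (ℤ → A))
    [IsProbabilityMeasure μ] (P : Measure C) [IsProbabilityMeasure P] :
    IsProbabilityMeasure (randomizedLaw φ μ P) :=
  Measure.isProbabilityMeasure_map (measurable_randomize hφ).aemeasurable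

theorem map_fullShift_infinitePi (P : Measure C) [IsProbabilityMeasure P] :
    (Measure.infinitePi fun _ : ℤ => P).map fullShift = Measure.infinitePi fun _ : ℤ => P :=
  Measure.map_infinitePi_infinitePi_of_inj (P := fun _ => P) (sub_left_injective (b := 1))

theorem map_fullShift_randomizedLaw (hφ : Measurable φ.uncurry) {μ : Measure (ℤ → A)} [SFinite μ]
    (hμ : μ.map fullShift = μ) (P : Measure C) [IsProbabilityMeasure P] :
    (randomizedLaw φ μ P).map fullShift = randomizedLaw φ μ P := by
  have h_comm : fullShift ∘ randomize φ = randomize φ ∘ Prod.map fullShift fullShift := rfl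
  rw [randomizedLaw, Measure.map_map measurable_fullShift (measurable_randomize hφ), h_comm,
    ← Measure.map_map (measurable_randomize hφ) (measurable_fullShift.prodMap measurable_fullShift),
    ← Measure.map_prod_map _ _ measurable_fullShift measurable_fullShift, hμ,
    map_fullShift_infinitePi]

theorem tendsto_randomizedLaw [TopologicalSpace A] [OpensMeasurableSpace (ℤ → A)]
    {φ : ℕ → A → C → A} (hφ : ∀ j, Measurable (φ j).uncurry)
    (hφ_lim : ∀ a t, Tendsto (fun j => φ j a t) atTop (𝓝 a)) (μ : ProbabilityMeasure (ℤ → A))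
    (P : Measure C) [IsProbabilityMeasure P] :
    Tendsto (β := ProbabilityMeasure (ℤ → A))
      (fun j => ⟨randomizedLaw (φ j) μ P, isProbabilityMeasure_randomizedLaw (hφ j) _ P⟩)
      atTop (𝓝 μ) := by
  have h_lim : TendstoInDistribution (fun j => randomize (φ j)) atTop Prod.fst
      (fun _ => (μ : Measure (ℤ → A)).prod (Measure.infinitePi fun _ => P))
      ((μ : Measure (ℤ → A)).prod (Measure.infinitePi fun _ => P)) :=
    tendstoInDistribution_of_ae_tendsto (fun j => (measurable_randomize (hφ j)).aemeasurable)
      measurable_fst.aemeasurable <|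
      .of_forall fun z => tendsto_pi_nhds.2 fun n => hφ_lim (z.1 n) (z.2 n)
  have h_fst : ⟨_, Measure.isProbabilityMeasure_map h_lim.aemeasurable_limit⟩ = μ :=
    Subtype.ext (by simp)
  have h_tendsto := h_lim.tendsto
  rw [h_fst] at h_tendsto
  exact h_tendsto

variable {ι : Type*} {g : ι → C → B}

theorem measurable_uncurry_simpleFunc (s : SimpleFunc A ι) (hg : ∀ i, Measurable (g i)) :
    Measurable (Function.uncurry fun a => g (s a)) :=
  (s.comp Prod.fst measurable_fst).measurable_bind (fun i z => g i z.2) fun i =>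
    (hg i).comp measurable_snd

theorem ae_infinitePi_upperRecRate_eq_top {M : Type*} [MetricSpace M] [SecondCountableTopology M]
    [MeasurableSpace M] [OpensMeasurableSpace M] {h : ℤ → C → M} (h_meas : ∀ n, Measurable (h n))
    (P : Measure C) [IsProbabilityMeasure P]
    (h_diffuse : ∀ η : ℝ≥0∞, 0 < η → ∃ δ > 0, ∀ n w, P.map (h n) (closedBall w δ) ≤ η) :
    ∀ᵐ u ∂Measure.infinitePi fun _ : ℤ => P,
      upperRecRate shiftDist fullShift (fun n => h n (u n)) = ⊤ := by
  have h_coord (n : ℤ) : Measurable fun u : ℤ → C => h n (u n) :=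
    (h_meas n).comp (measurable_pi_apply n)
  have h_indep : iIndepFun (fun n (u : ℤ → C) => h n (u n)) (Measure.infinitePi fun _ => P) :=
    iIndepFun_infinitePi h_meas
  refine ae_upperRecRate_eq_top_of_iIndepFun h_coord h_indep fun η hη => ?_
  obtain ⟨δ, hδ, h_le⟩ := h_diffuse η hη
  refine ⟨δ, hδ, fun n w => ?_⟩
  have h_ball : MeasurableSet (h n ⁻¹' closedBall w δ) := h_meas n measurableSet_closedBall
  calc Measure.infinitePi (fun _ : ℤ => P) ((fun u => h n (u n)) ⁻¹' closedBall w δ)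
      = P (h n ⁻¹' closedBall w δ) :=
        (measurePreserving_eval_infinitePi (fun _ : ℤ => P) n).measure_preimage
          h_ball.nullMeasurableSet
    _ = P.map (h n) (closedBall w δ) :=
        (Measure.map_apply (h_meas n) measurableSet_closedBall).symm
    _ ≤ η := h_le n w

theorem ae_randomizedLaw_upperRecRate_eq_top {M : Type*} [MetricSpace M]
    [SecondCountableTopology M] [MeasurableSpace M] [OpensMeasurableSpace M] (s : SimpleFunc A ι)
    {g : ι → C → M} (hg : ∀ i, Measurable (g i)) (μ : Measure (ℤ → A)) (P : Measure C)
    [IsProbabilityMeasure P] (hP : ∀ i, NullSingletonClass (P.map (g i))) :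
    ∀ᵐ x ∂randomizedLaw (fun a => g (s a)) μ P, upperRecRate shiftDist fullShift x = ⊤ := by
  have hφ := measurable_randomize (measurable_uncurry_simpleFunc s hg)
  have h_meas : MeasurableSet {x : ℤ → M | upperRecRate shiftDist fullShift x = ⊤} :=
    (isGδ_setOf_upperRecRate_eq_top continuous_shiftDist_fullShift_iterate).measurableSet
  rw [randomizedLaw, ae_map_iff hφ.aemeasurable h_meas]
  refine (Measure.ae_prod_iff_ae_ae (hφ h_meas)).2 ?_
  refine .of_forall fun x => ae_infinitePi_upperRecRate_eq_top (h := fun n => g (s (x n)))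
    (fun n => hg _) P fun η hη => ?_
  have h_uniform : ∀ᶠ δ in 𝓝[>] (0 : ℝ), ∀ i ∈ s.range, ∀ w, P.map (g i) (closedBall w δ) ≤ η :=
    (eventually_all_finset _).2 fun i _ => eventually_forall_measure_closedBall_le _ hη
  obtain ⟨δ, hδ, hδ_pos⟩ := (h_uniform.and self_mem_nhdsWithin).exists
  exact ⟨δ, hδ_pos, fun n w => hδ _ (s.mem_range_self _) w⟩

end Randomization

section PerfectPolish

theorem not_countable_of_isOpen {X : Type*} [TopologicalSpace X] [T1Space X] [BaireSpace X]
    [PerfectSpace X] {U : Set X} (hU : IsOpen U) (hU_ne : U.Nonempty) : ¬ U.Countable := by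
  intro hU_count
  have h_dense : Dense (⋂ x ∈ U, {x}ᶜ) := dense_biInter_of_isOpen
    (fun _ _ => isOpen_compl_singleton) hU_count fun x _ => dense_compl_singleton x
  obtain ⟨x, hxU, hx⟩ := h_dense.inter_open_nonempty U hU hU_ne
  exact mem_iInter₂.1 hx x hxU rfl

theorem exists_measurable_injective_forall_mem {X : Type*} [TopologicalSpace X] [PolishSpace X]
    [PerfectSpace X] [MeasurableSpace X] [BorelSpace X] {U : Set X} (hU : IsOpen U)
    (hU_ne : U.Nonempty) : ∃ f : I → X, Measurable f ∧ f.Injective ∧ ∀ t, f t ∈ U := by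
  have h_borel : StandardBorelSpace U := hU.measurableSet.standardBorel
  have hI : ¬ Countable I := fun h =>
    not_countable_of_isOpen isOpen_univ univ_nonempty (countable_univ_iff.2 h)
  let e : I ≃ᵐ U := PolishSpace.measurableEquivOfNotCountable hI
    fun h => not_countable_of_isOpen hU hU_ne (countable_coe_iff.1 h)
  exact ⟨fun t => e t, measurable_subtype_coe.comp e.measurable,
    Subtype.val_injective.comp e.injective, fun t => (e t).2⟩

variable {M : Type*} [MetricSpace M] [PolishSpace M] [PerfectSpace M] [MeasurableSpace M]
  [BorelSpace M]

theorem exists_seq_tendsto_ae_upperRecRate_eq_top (μ : ProbabilityMeasure (ℤ → M))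
    (hμ : μ.toMeasure.map fullShift = μ.toMeasure) :
    ∃ ν : ℕ → ProbabilityMeasure (ℤ → M), (∀ j, (ν j).toMeasure.map fullShift = (ν j).toMeasure) ∧
      (∀ j, ∀ᵐ x ∂(ν j).toMeasure, upperRecRate shiftDist fullShift x = ⊤) ∧
      Tendsto ν atTop (𝓝 μ) := by
  have : Nonempty M := μ.nonempty.map (· 0)
  let s : ℕ → SimpleFunc M M := SimpleFunc.nearestPt (TopologicalSpace.denseSeq M)
  have h_cloud (j : ℕ) (m : M) : ∃ f : I → M,
      Measurable f ∧ f.Injective ∧ ∀ t, f t ∈ ball m (1 / (j + 1)) :=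
    exists_measurable_injective_forall_mem isOpen_ball (nonempty_ball.2 Nat.one_div_pos_of_nat)
  choose g hg_meas hg_inj hg_ball using h_cloud
  have hφ (j : ℕ) : Measurable (Function.uncurry fun m => g j (s j m)) :=
    measurable_uncurry_simpleFunc (s j) (hg_meas j)
  have hφ_lim (m : M) (t : I) : Tendsto (fun j => g j (s j m) t) atTop (𝓝 m) := by
    have hs : Tendsto (fun j => s j m) atTop (𝓝 m) :=
      SimpleFunc.tendsto_nearestPt (TopologicalSpace.denseRange_denseSeq M m)
    refine tendsto_of_tendsto_of_dist hs <| squeeze_zero (fun _ => dist_nonneg) (fun j => ?_)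
      tendsto_one_div_add_atTop_nhds_zero_nat
    exact (mem_ball'.1 (hg_ball j (s j m) t)).le
  exact ⟨fun j => ⟨_, isProbabilityMeasure_randomizedLaw (hφ j) μ volume⟩,
    fun j => map_fullShift_randomizedLaw (hφ j) hμ volume,
    fun j => ae_randomizedLaw_upperRecRate_eq_top (s j) (hg_meas j) _ volume
      fun m => nullSingletonClass_map (hg_meas j m) (hg_inj j m) volume,
    tendsto_randomizedLaw hφ hφ_lim μ volume⟩

end PerfectPolish

theorem fullShift_upperRecRateInfinite_denseGδ_general {M : Type*} [MetricSpace M] [PolishSpace M]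
    [PerfectSpace M] [MeasurableSpace M] [BorelSpace M] :
    IsGδ {μ : {ν : ProbabilityMeasure (ℤ → M) // ν.toMeasure.map fullShift = ν.toMeasure} |
        ∀ᵐ x ∂μ.1.toMeasure, upperRecRate shiftDist fullShift x = ⊤} ∧
    Dense {μ : {ν : ProbabilityMeasure (ℤ → M) // ν.toMeasure.map fullShift = ν.toMeasure} |
        ∀ᵐ x ∂μ.1.toMeasure, upperRecRate shiftDist fullShift x = ⊤} := by
  constructor
  · have h_rate : IsGδ {x : ℤ → M | upperRecRate shiftDist fullShift x = ⊤} :=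
      isGδ_setOf_upperRecRate_eq_top continuous_shiftDist_fullShift_iterate
    exact (isGδ_setOf_ae_mem h_rate).preimage continuous_subtype_val
  · rintro ⟨μ, hμ⟩
    obtain ⟨ν, hν_inv, hν_rate, hν_lim⟩ := exists_seq_tendsto_ae_upperRecRate_eq_top μ hμ
    exact mem_closure_of_tendsto (f := fun j => ⟨ν j, hν_inv j⟩)
      (tendsto_subtype_rng.2 hν_lim) (.of_forall hν_rate)

/-- For the full shift on `ℤ → M` over a perfect Polish metric space `M`,
the set of invariant measures whose upper recurrence rate is infinite almost everywhere is a
dense `Gδ` subset of `M(T)`. -/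
theorem fullShift_upperRecRateInfinite_denseGδ {M : Type*} [MetricSpace M] [CompleteSpace M]
    [TopologicalSpace.SeparableSpace M] [PerfectSpace M]
    [MeasurableSpace M] [BorelSpace M] :
    IsGδ {μ : {ν : ProbabilityMeasure (ℤ → M) // ν.toMeasure.map fullShift = ν.toMeasure} |
        ∀ᵐ x ∂μ.1.toMeasure, upperRecRate shiftDist fullShift x = ⊤} ∧
    Dense {μ : {ν : ProbabilityMeasure (ℤ → M) // ν.toMeasure.map fullShift = ν.toMeasure} |
        ∀ᵐ x ∂μ.1.toMeasure, upperRecRate shiftDist fullShift x = ⊤} := by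
  have : SecondCountableTopology M := UniformSpace.secondCountable_of_separable M
  exact fullShift_upperRecRateInfinite_denseGδ_general
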